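/- Let p be a prime number and let k and n be positive integers. Let S be the sum of all kp-nomial coefficients with n at the top which are not divisible by p, i.e., S = ∑ over all (x₁, …, x_{kp}) of nonnegative integers with x₁+⋯+x_{kp} = n and p ∤ n!/(x₁!⋯x_{kp}!), of n!/(x₁!⋯x_{kp}!). Then ν_p(S) ≥ s_p*(n) + ν_p(k), where s_p*(n) is the number of nonzero digits in the expansion of n in base p. -/

import Mathlib

/-- `spstar p n` is the number of nonzero digits in the base-`p` expansion of `n`. -/
def spstar (p n : ℕ) : ℕ := ((Nat.digits p n).filter (fun a => a ≠ 0)).length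

/-!
Call `x` carry-free if `∑ j, x j = n` and its multinomial coefficient is prime to `p`. By Lucas'
theorem, `x` is carry-free exactly when `x = a + p • y` with `y` carry-free of sum `n / p` and
`∑ j, a j = n % p`. The multinomial coefficients of `x` and `y` then differ by a factor built from
factorials with the multiples of `p` left out, and this factor is `p`-adically 1-Lipschitz in `x`.
So fix a symmetric Lipschitz weight `w`: summing out `a` turns the sum of `w` against the
multinomial coefficients with sum `n` into one with sum `n / p` and the weight
`W y = ∑ a, q (a + p • y)`, with `q` again symmetric and Lipschitz.

Suppose that `n % p ≠ 0` and fix an index `i`. Moving each unit of `a` to the place `i` by a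
transposition rewrites `(n % p) * W y` as a combination of sums `∑ j, q (a + p • (y ∘ swap i j))`.
The terms of such a sum agree modulo `p`, and their number is divisible by `p`, so `W` is `p` times
a Lipschitz weight. Each nonzero digit thus contributes a factor `p`; at the leading digit `y = 0`,
all terms coincide, and the factor is the whole number of variables.
-/

open Finset
open scoped Nat

section PrimeToFactorial

/-- The factorial of `n` with the multiples of `p` left out: the product of the integers
`1 ≤ i ≤ n` that are not divisible by `p`. Up to sign, this is Morita's `p`-adic Gamma function at
`n + 1`. -/
def primeToFactorial (p n : ℕ) : ℕ := ∏ i ∈ range n, if p ∣ i + 1 then 1 else i + 1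

variable {p : ℕ}

lemma primeToFactorial_succ (p n : ℕ) :
    primeToFactorial p (n + 1) = primeToFactorial p n * if p ∣ n + 1 then 1 else n + 1 :=
  prod_range_succ _ n

lemma not_dvd_primeToFactorial (hp : p.Prime) (n : ℕ) : ¬ p ∣ primeToFactorial p n := by
  rw [primeToFactorial, hp.prime.dvd_finsetProd_iff]
  rintro ⟨i, -, hi⟩
  split_ifs at hi with h
  · exact hp.one_lt.ne' (Nat.dvd_one.mp hi)
  · exact h hi

lemma factorial_eq_pow_mul_factorial_div_mul_primeToFactorial (p n : ℕ) :
    n ! = p ^ (n / p) * (n / p)! * primeToFactorial p n := by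
  induction n with
  | zero => simp [primeToFactorial]
  | succ n ih =>
    rw [Nat.factorial_succ, primeToFactorial_succ, Nat.succ_div]
    split_ifs with h
    · have hn : n + 1 = p * (n / p + 1) := by
        rw [← Nat.succ_div_of_dvd h, Nat.mul_div_cancel' h]
      calc (n + 1) * n !
          = p * (n / p + 1) * (p ^ (n / p) * (n / p)! * primeToFactorial p n) := by rw [← hn, ← ih]
        _ = _ := by rw [Nat.factorial_succ]; ring
    · rw [ih, add_zero]
      ring

lemma primeToFactorial_pow_add_modEq {t : ℕ} (ht : t ≠ 0) (n : ℕ) :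
    primeToFactorial p (p ^ t + n) ≡
      primeToFactorial p (p ^ t) * primeToFactorial p n [MOD p ^ t] := by
  unfold primeToFactorial
  rw [prod_range_add]
  refine Nat.ModEq.mul_left _ (Nat.ModEq.prod fun i _ => ?_)
  have hdvd : p ∣ p ^ t + i + 1 ↔ p ∣ i + 1 := by
    rw [add_assoc, Nat.dvd_add_right (dvd_pow_self p ht)]
  simp only [hdvd]
  split_ifs
  · rfl
  · simp [Nat.ModEq, add_assoc]

lemma primeToFactorial_pow_mul_add_modEq (p t q n : ℕ) :
    primeToFactorial p (p ^ t * q + n) ≡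
      primeToFactorial p (p ^ t) ^ q * primeToFactorial p n [MOD p ^ t] := by
  rcases eq_or_ne t 0 with rfl | ht
  · simp [Nat.modEq_one]
  induction q with
  | zero => simpa using Nat.ModEq.refl _
  | succ q ih =>
    rw [show p ^ t * (q + 1) + n = p ^ t + (p ^ t * q + n) by ring, pow_succ', mul_assoc]
    exact (primeToFactorial_pow_add_modEq ht _).trans (ih.mul_left _)

end PrimeToFactorial

section Digits

variable {ι : Type*} [Fintype ι] {p : ℕ}

lemma sum_eq_mul_sum_div_add_sum_mod (p : ℕ) (x : ι → ℕ) :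
    ∑ j, x j = p * ∑ j, x j / p + ∑ j, x j % p := by
  simp only [mul_sum, ← sum_add_distrib, Nat.div_add_mod]

lemma sum_div_le_div_sum (p : ℕ) (x : ι → ℕ) : ∑ j, x j / p ≤ (∑ j, x j) / p := by
  rcases p.eq_zero_or_pos with rfl | hp
  · simp
  · rw [Nat.le_div_iff_mul_le hp, sum_mul]
    exact sum_le_sum fun j _ => Nat.div_mul_le_self _ _

lemma sum_mod_eq_mod_sum_iff (hp : 0 < p) (x : ι → ℕ) :
    ∑ j, x j % p = (∑ j, x j) % p ↔ ∑ j, x j / p = (∑ j, x j) / p := by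
  have hvec := sum_eq_mul_sum_div_add_sum_mod p x
  have hsum := Nat.div_add_mod (∑ j, x j) p
  constructor <;> intro h
  · exact Nat.eq_of_mul_eq_mul_left hp (by omega)
  · rw [h] at hvec
    omega

lemma sum_add_smul (p : ℕ) (a y : ι → ℕ) : ∑ j, (a + p • y) j = ∑ j, a j + p * ∑ j, y j := by
  simp [sum_add_distrib, mul_sum]

lemma add_smul_div_eq {a : ι → ℕ} (y : ι → ℕ) (ha : ∑ j, a j < p) (j : ι) :
    (a + p • y) j / p = y j := by
  have haj : a j < p := (single_le_sum_of_canonicallyOrdered (mem_univ j)).trans_lt ha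
  simp [Nat.add_mul_div_left _ _ (Nat.zero_lt_of_lt haj), Nat.div_eq_of_lt haj]

lemma add_smul_mod_eq {a : ι → ℕ} (y : ι → ℕ) (ha : ∑ j, a j < p) (j : ι) :
    (a + p • y) j % p = a j := by
  have haj : a j < p := (single_le_sum_of_canonicallyOrdered (mem_univ j)).trans_lt ha
  simp [Nat.mod_eq_of_lt haj]

lemma prod_primeToFactorial_modEq (hp : 0 < p) {t : ℕ} {x y : ι → ℕ}
    (hsum : ∑ j, x j = ∑ j, y j) (hxy : ∀ j, x j ≡ y j [MOD p ^ t]) :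
    ∏ j, primeToFactorial p (x j) ≡ ∏ j, primeToFactorial p (y j) [MOD p ^ t] := by
  have reduce (x : ι → ℕ) : ∏ j, primeToFactorial p (x j) ≡
      primeToFactorial p (p ^ t) ^ (∑ j, x j / p ^ t) * ∏ j, primeToFactorial p (x j % p ^ t)
        [MOD p ^ t] := by
    rw [← prod_pow_eq_pow_sum, ← prod_mul_distrib]
    refine Nat.ModEq.prod fun j _ => ?_
    simpa only [Nat.div_add_mod] using
      primeToFactorial_pow_mul_add_modEq p t (x j / p ^ t) (x j % p ^ t)
  have hmod (j : ι) : x j % p ^ t = y j % p ^ t := hxy j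
  have hdiv : ∑ j, x j / p ^ t = ∑ j, y j / p ^ t := by
    rw [sum_eq_mul_sum_div_add_sum_mod (p ^ t) x, sum_eq_mul_sum_div_add_sum_mod (p ^ t) y] at hsum
    simp only [hmod, add_left_inj] at hsum
    exact Nat.eq_of_mul_eq_mul_left (pow_pos hp t) hsum
  calc ∏ j, primeToFactorial p (x j)
      ≡ _ [MOD p ^ t] := reduce x
    _ = _ := by simp only [hdiv, hmod]
    _ ≡ ∏ j, primeToFactorial p (y j) [MOD p ^ t] := (reduce y).symm

end Digits

section Multinomial

variable {ι : Type*} [Fintype ι] {p : ℕ}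

/-- The exponent `c = (∑ j, x j) / p - ∑ j, x j / p` is the carry out of the lowest digit when the
`x j` are added in base `p`. -/
lemma multinomial_mul_prod_primeToFactorial (hp : 0 < p) (x : ι → ℕ) {c : ℕ}
    (hc : (∑ j, x j) / p = ∑ j, x j / p + c) :
    Nat.multinomial univ x * ∏ j, primeToFactorial p (x j) =
      p ^ c * ((∑ j, x j) / p).descFactorial c *
        (primeToFactorial p (∑ j, x j) * Nat.multinomial univ fun j => x j / p) := by
  set n := ∑ j, x j
  have hprod : ∏ j, (x j)! =
      p ^ (∑ j, x j / p) * (∏ j, (x j / p)!) * ∏ j, primeToFactorial p (x j) := by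
    rw [← prod_pow_eq_pow_sum, ← prod_mul_distrib, ← prod_mul_distrib]
    exact prod_congr rfl fun j _ => factorial_eq_pow_mul_factorial_div_mul_primeToFactorial p _
  have hspec : (∏ j, (x j)!) * Nat.multinomial univ x = n ! := Nat.multinomial_spec _ _
  have hspec_div : (∏ j, (x j / p)!) * (Nat.multinomial univ fun j => x j / p) =
      (∑ j, x j / p)! := Nat.multinomial_spec _ _
  have hdesc : (∑ j, x j / p)! * (n / p).descFactorial c = (n / p)! := by
    rw [← Nat.factorial_mul_descFactorial (n := n / p) (k := c) (by omega), hc,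
      Nat.add_sub_cancel]
  have hpos : 0 < p ^ (∑ j, x j / p) * ∏ j, (x j / p)! :=
    Nat.mul_pos (pow_pos hp _) (prod_pos fun j _ => Nat.factorial_pos _)
  refine Nat.eq_of_mul_eq_mul_left hpos ?_
  calc p ^ (∑ j, x j / p) * (∏ j, (x j / p)!) *
        (Nat.multinomial univ x * ∏ j, primeToFactorial p (x j))
      = n ! := by rw [← hspec, hprod]; ring
    _ = p ^ (∑ j, x j / p + c) * (n / p)! * primeToFactorial p n := by
      rw [← hc, ← factorial_eq_pow_mul_factorial_div_mul_primeToFactorial]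
    _ = _ := by rw [← hdesc, ← hspec_div, pow_add]; ring

lemma multinomial_mul_prod_primeToFactorial_of_sum_div_eq (hp : 0 < p) {x : ι → ℕ}
    (hx : ∑ j, x j / p = (∑ j, x j) / p) :
    Nat.multinomial univ x * ∏ j, primeToFactorial p (x j) =
      primeToFactorial p (∑ j, x j) * Nat.multinomial univ fun j => x j / p := by
  simpa using multinomial_mul_prod_primeToFactorial hp x (c := 0) hx.symm

/-- One digit of Lucas' theorem for multinomial coefficients. -/
lemma dvd_multinomial_iff (hp : p.Prime) (x : ι → ℕ) :
    p ∣ Nat.multinomial univ x ↔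
      ∑ j, x j / p ≠ (∑ j, x j) / p ∨ p ∣ Nat.multinomial univ fun j => x j / p := by
  have hprod : ¬ p ∣ ∏ j, primeToFactorial p (x j) := by
    simp [hp.prime.dvd_finsetProd_iff, not_dvd_primeToFactorial hp]
  obtain ⟨c, hc⟩ := Nat.exists_eq_add_of_le (sum_div_le_div_sum p x)
  have hrec := multinomial_mul_prod_primeToFactorial hp.pos x hc
  rw [← or_iff_left (a := p ∣ Nat.multinomial univ x) hprod, ← hp.dvd_mul, hrec]
  rcases eq_or_ne c 0 with rfl | hc0
  · simp [hc, hp.dvd_mul, not_dvd_primeToFactorial hp]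
  · have : p ∣ p ^ c := dvd_pow_self p hc0
    simp [hc, hc0, Dvd.dvd.mul_right, this]

end Multinomial

section CarryFree

variable {ι : Type*} [Fintype ι] [DecidableEq ι] {p n : ℕ}

/-- The vectors of sum `n` whose multinomial coefficient is not divisible by `p`; by Kummer's
theorem, these are the ones whose entries add up to `n` without carries in base `p`. -/
def carryFree (p n : ℕ) : Finset (ι → ℕ) :=
  {x ∈ piAntidiag univ n | ¬ p ∣ Nat.multinomial univ x}

lemma mem_piAntidiag_univ {x : ι → ℕ} : x ∈ piAntidiag univ n ↔ ∑ j, x j = n := by simp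

lemma mem_carryFree {x : ι → ℕ} :
    x ∈ carryFree p n ↔ ∑ j, x j = n ∧ ¬ p ∣ Nat.multinomial univ x := by
  rw [carryFree, mem_filter, mem_piAntidiag_univ]

lemma carryFree_zero (hp : p ≠ 1) : (carryFree p 0 : Finset (ι → ℕ)) = {0} := by
  have : Nat.multinomial univ (0 : ι → ℕ) = 1 := by simp [Nat.multinomial]
  rw [carryFree, piAntidiag_zero, filter_singleton, this]
  simp [hp]

lemma single_mem_carryFree (hp : p ≠ 1) (i : ι) (n : ℕ) : Pi.single i n ∈ carryFree p n := by
  simp [mem_carryFree, Nat.multinomial_single, hp]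

lemma mem_carryFree_iff_div_mod (hp : p.Prime) {x : ι → ℕ} :
    x ∈ carryFree p n ↔
      (fun j => x j / p) ∈ carryFree p (n / p) ∧ ∑ j, x j % p = n % p := by
  simp only [mem_carryFree, dvd_multinomial_iff hp x, not_or, not_not]
  constructor
  · rintro ⟨rfl, hdiv, hndvd⟩
    exact ⟨⟨hdiv, hndvd⟩, (sum_mod_eq_mod_sum_iff hp.pos x).2 hdiv⟩
  · rintro ⟨⟨hdiv, hndvd⟩, hmod⟩
    have hsum : ∑ j, x j = n := by
      rw [sum_eq_mul_sum_div_add_sum_mod p x, hdiv, hmod, Nat.div_add_mod]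
    exact ⟨hsum, hsum ▸ hdiv, hndvd⟩

lemma sum_carryFree {M : Type*} [AddCommMonoid M] (hp : p.Prime) (f : (ι → ℕ) → M) :
    ∑ x ∈ carryFree p n, f x =
      ∑ y ∈ carryFree p (n / p), ∑ a ∈ piAntidiag univ (n % p), f (a + p • y) := by
  rw [sum_sigma']
  refine sum_bij' (fun x _ => ⟨fun j => x j / p, fun j => x j % p⟩) (fun s _ => s.2 + p • s.1)
    ?_ ?_ ?_ ?_ ?_
  · intro x hx
    simpa only [mem_sigma, mem_piAntidiag_univ] using (mem_carryFree_iff_div_mod hp).1 hx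
  · rintro ⟨y, a⟩ h
    obtain ⟨hy, ha⟩ : y ∈ carryFree p (n / p) ∧ ∑ j, a j = n % p := by
      simpa only [mem_sigma, mem_piAntidiag_univ] using h
    have hlt : ∑ j, a j < p := ha ▸ Nat.mod_lt n hp.pos
    rw [mem_carryFree_iff_div_mod hp]
    simpa only [add_smul_div_eq y hlt, add_smul_mod_eq y hlt] using ⟨hy, ha⟩
  · intro x _
    ext j
    simp [Nat.mod_add_div]
  · rintro ⟨y, a⟩ h
    obtain ⟨-, ha⟩ : y ∈ carryFree p (n / p) ∧ ∑ j, a j = n % p := by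
      simpa only [mem_sigma, mem_piAntidiag_univ] using h
    have hlt : ∑ j, a j < p := ha ▸ Nat.mod_lt n hp.pos
    simp only [add_smul_div_eq y hlt, add_smul_mod_eq y hlt]
  · intro x _
    congr 1
    ext j
    simp [Nat.mod_add_div]

end CarryFree

section IsPadicLipschitz

variable {ι R : Type*} [Fintype ι] [CommRing R] {p n r : ℕ} {v w : (ι → ℕ) → R}

/-- On the vectors of sum `n`, the function `w` behaves like `p ^ r` times a function that is
`1`-Lipschitz for the `p`-adic distance. Only divisibility by powers of `p` is involved, so that
`R` may have torsion. -/
structure IsPadicLipschitz (p n r : ℕ) (w : (ι → ℕ) → R) : Prop where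
  pow_dvd : ∀ x, ∑ j, x j = n → (p : R) ^ r ∣ w x
  pow_dvd_sub : ∀ t x y, ∑ j, x j = n → ∑ j, y j = n → (∀ j, x j ≡ y j [MOD p ^ t]) →
    (p : R) ^ (r + t) ∣ w x - w y

namespace IsPadicLipschitz

lemma const {c : R} (hc : (p : R) ^ r ∣ c) :
    IsPadicLipschitz p n r fun _ : ι → ℕ => c where
  pow_dvd _ _ := hc
  pow_dvd_sub _ _ _ _ _ _ := by simp

lemma natCast {f : (ι → ℕ) → ℕ}
    (hf : ∀ t x y, ∑ j, x j = n → ∑ j, y j = n → (∀ j, x j ≡ y j [MOD p ^ t]) →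
      f x ≡ f y [MOD p ^ t]) :
    IsPadicLipschitz p n 0 fun x => (f x : R) where
  pow_dvd _ _ := by simp
  pow_dvd_sub t x y hx hy hxy := by
    simpa using map_dvd (Int.castRingHom R) (hf t x y hx hy hxy).symm.dvd

lemma sum {κ : Type*} {s : Finset κ} {w : κ → (ι → ℕ) → R}
    (hw : ∀ k ∈ s, IsPadicLipschitz p n r (w k)) :
    IsPadicLipschitz p n r fun x => ∑ k ∈ s, w k x where
  pow_dvd x hx := dvd_sum fun k hk => (hw k hk).pow_dvd x hx
  pow_dvd_sub t x y hx hy hxy := by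
    rw [← sum_sub_distrib]
    exact dvd_sum fun k hk => (hw k hk).pow_dvd_sub t x y hx hy hxy

lemma mul {s : ℕ} (hv : IsPadicLipschitz p n r v) (hw : IsPadicLipschitz p n s w) :
    IsPadicLipschitz p n (r + s) fun x => v x * w x where
  pow_dvd x hx := by
    rw [pow_add]
    exact mul_dvd_mul (hv.pow_dvd x hx) (hw.pow_dvd x hx)
  pow_dvd_sub t x y hx hy hxy := by
    have hfst : (p : R) ^ (r + s + t) ∣ (v x - v y) * w x := by
      rw [show r + s + t = r + t + s by ring, pow_add]
      exact mul_dvd_mul (hv.pow_dvd_sub t x y hx hy hxy) (hw.pow_dvd x hx)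
    have hsnd : (p : R) ^ (r + s + t) ∣ v y * (w x - w y) := by
      rw [add_assoc, pow_add]
      exact mul_dvd_mul (hv.pow_dvd y hy) (hw.pow_dvd_sub t x y hx hy hxy)
    have hsplit : v x * w x - v y * w y = (v x - v y) * w x + v y * (w x - w y) := by ring
    exact hsplit ▸ dvd_add hfst hsnd

lemma const_mul (hw : IsPadicLipschitz p n r w) (c : R) :
    IsPadicLipschitz p n r fun x => c * w x := by
  simpa using (const (r := 0) (c := c) (by simp)).mul hw

lemma of_const_mul {c : R} (hc : IsUnit c) (h : IsPadicLipschitz p n r fun x => c * w x) :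
    IsPadicLipschitz p n r w where
  pow_dvd x hx := hc.dvd_mul_left.1 (h.pow_dvd x hx)
  pow_dvd_sub t x y hx hy hxy := by
    rw [← hc.dvd_mul_left, mul_sub]
    exact h.pow_dvd_sub t x y hx hy hxy

lemma of_mul_eq_one (hw : IsPadicLipschitz p n 0 w) (hvw : ∀ x, w x * v x = 1) :
    IsPadicLipschitz p n 0 v where
  pow_dvd _ _ := by simp
  pow_dvd_sub t x y hx hy hxy := by
    have hsub : v x - v y = v x * v y * (w y - w x) := by
      linear_combination v y * hvw x - v x * hvw y
    rw [hsub]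
    exact (hw.pow_dvd_sub t y x hy hx fun j => (hxy j).symm).mul_left _

lemma add_smul {a : ι → ℕ} {m : ℕ} (hw : IsPadicLipschitz p n r w)
    (hn : ∑ j, a j + p * m = n) :
    IsPadicLipschitz p m r fun y => w (a + p • y) where
  pow_dvd y hy := hw.pow_dvd _ (by rw [sum_add_smul, hy, hn])
  pow_dvd_sub t x y hx hy hxy :=
    hw.pow_dvd_sub t _ _ (by rw [sum_add_smul, hx, hn]) (by rw [sum_add_smul, hy, hn])
      fun j => ((hxy j).mul_left p).add_left (a j)

/-- The terms of the sum agree modulo `p ^ (r + 1)` and are divisible by `p ^ r`, hence the gain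
of a factor `p` when their number is a multiple of `p`. -/
lemma sum_add_smul_comp_perm {κ : Type*} [Fintype κ] {a : ι → ℕ} {m : ℕ}
    (hw : IsPadicLipschitz p n r w) (hn : ∑ j, a j + p * m = n) (hκ : p ∣ Fintype.card κ)
    (σ : κ → Equiv.Perm ι) :
    IsPadicLipschitz p m (r + 1) fun y => ∑ k, w (a + p • (y ∘ σ k)) := by
  have hperm {y : ι → ℕ} (hy : ∑ j, y j = m) (k : κ) : ∑ j, (y ∘ σ k) j = m :=
    hy ▸ Equiv.sum_comp (σ k) y
  have hsum {y : ι → ℕ} (hy : ∑ j, y j = m) : ∑ j, (a + p • y) j = n := by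
    rw [sum_add_smul, hy, hn]
  refine ⟨fun y hy => ?_, fun t x y hx hy hxy => ?_⟩
  · have hdiff : (p : R) ^ (r + 1) ∣ ∑ k, (w (a + p • (y ∘ σ k)) - w (a + p • y)) :=
      dvd_sum fun k _ => hw.pow_dvd_sub 1 _ _ (hsum (hperm hy k)) (hsum hy)
        fun j => by simp [Nat.ModEq]
    have hcard : (p : R) ^ (r + 1) ∣ Fintype.card κ * w (a + p • y) := by
      rw [pow_succ']
      exact mul_dvd_mul (Nat.cast_dvd_cast hκ) (hw.pow_dvd _ (hsum hy))
    simpa using dvd_add hdiff hcard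
  · rw [← sum_sub_distrib, add_assoc, add_comm 1 t]
    refine dvd_sum fun k _ =>
      hw.pow_dvd_sub (t + 1) _ _ (hsum (hperm hx k)) (hsum (hperm hy k)) fun j => ?_
    rw [pow_succ']
    exact ((hxy (σ k j)).mul_left' p).add_left (a j)

end IsPadicLipschitz

end IsPadicLipschitz

section Averaging

variable {ι : Type*} [Fintype ι] [DecidableEq ι]

lemma sum_piAntidiag_comp_perm {M : Type*} [AddCommMonoid M] (d : ℕ) (σ : Equiv.Perm ι)
    (f : (ι → ℕ) → M) :
    ∑ a ∈ piAntidiag univ d, f (a ∘ σ) = ∑ a ∈ piAntidiag univ d, f a := by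
  refine sum_equiv (σ.symm.arrowCongr (Equiv.refl ℕ)) (fun a => ?_) fun a _ => rfl
  simp only [mem_piAntidiag_univ, Equiv.arrowCongr_apply]
  exact (Equiv.sum_comp σ a).symm ▸ Iff.rfl

lemma sum_piAntidiag_add_smul_comp_perm {M : Type*} [AddCommMonoid M] {f : (ι → ℕ) → M}
    (hf : ∀ (σ : Equiv.Perm ι) x, f (x ∘ σ) = f x) (p d : ℕ) (σ : Equiv.Perm ι) (y : ι → ℕ) :
    ∑ a ∈ piAntidiag univ d, f (a + p • (y ∘ σ)) = ∑ a ∈ piAntidiag univ d, f (a + p • y) := by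
  rw [← sum_piAntidiag_comp_perm d σ]
  exact sum_congr rfl fun a _ => hf σ (a + p • y)

lemma mul_sum_piAntidiag_add_smul_eq {R : Type*} [CommSemiring R] {f : (ι → ℕ) → R}
    (hf : ∀ (σ : Equiv.Perm ι) x, f (x ∘ σ) = f x) (p d : ℕ) (i : ι) (y : ι → ℕ) :
    (d : R) * ∑ a ∈ piAntidiag univ d, f (a + p • y) =
      ∑ a ∈ piAntidiag univ d, (a i : R) * ∑ j, f (a + p • (y ∘ Equiv.swap i j)) := by
  have move (j : ι) : ∑ a ∈ piAntidiag univ d, (a j : R) * f (a + p • y) =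
      ∑ a ∈ piAntidiag univ d, (a i : R) * f (a + p • (y ∘ Equiv.swap i j)) := by
    rw [← sum_piAntidiag_comp_perm d (Equiv.swap i j)]
    refine sum_congr rfl fun a _ => ?_
    have hswap : a ∘ Equiv.swap i j + p • y =
        (a + p • (y ∘ Equiv.swap i j)) ∘ Equiv.swap i j := by
      ext; simp
    rw [hswap, hf, Function.comp_apply, Equiv.swap_apply_right]
  calc (d : R) * ∑ a ∈ piAntidiag univ d, f (a + p • y)
      = ∑ a ∈ piAntidiag univ d, ∑ j, (a j : R) * f (a + p • y) := by
        rw [mul_sum]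
        refine sum_congr rfl fun a ha => ?_
        rw [← sum_mul, ← Nat.cast_sum, mem_piAntidiag_univ.1 ha]
    _ = ∑ j, ∑ a ∈ piAntidiag univ d, (a i : R) * f (a + p • (y ∘ Equiv.swap i j)) := by
        rw [sum_comm]
        exact sum_congr rfl fun j _ => move j
    _ = _ := by
        rw [sum_comm]
        simp only [mul_sum]

end Averaging

section WeightedSum

variable {ι R : Type*} [Fintype ι] [CommRing R] {p n r : ℕ} {w : (ι → ℕ) → R}

/-- The reciprocal of `∏ j, primeToFactorial p (x j)` in a ring in which the integers prime to `p`
are invertible (`Ring.inverse` is zero at non-units). -/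
noncomputable def invPrimeToFactorial (R : Type*) [CommRing R] (p : ℕ) (x : ι → ℕ) : R :=
  Ring.inverse (∏ j, primeToFactorial p (x j) : ℕ)

lemma prod_primeToFactorial_mul_invPrimeToFactorial (hp : p.Prime)
    (hunit : ∀ m : ℕ, ¬ p ∣ m → IsUnit (m : R)) (x : ι → ℕ) :
    ((∏ j, primeToFactorial p (x j) : ℕ) : R) * invPrimeToFactorial R p x = 1 := by
  refine Ring.mul_inverse_cancel _ (hunit _ ?_)
  simp [hp.prime.dvd_finsetProd_iff, not_dvd_primeToFactorial hp]

lemma isPadicLipschitz_invPrimeToFactorial (hp : p.Prime)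
    (hunit : ∀ m : ℕ, ¬ p ∣ m → IsUnit (m : R)) (n : ℕ) :
    IsPadicLipschitz p n 0 (invPrimeToFactorial R p : (ι → ℕ) → R) :=
  (IsPadicLipschitz.natCast fun _ _ _ hx hy hxy =>
    prod_primeToFactorial_modEq hp.pos (hx.trans hy.symm) hxy).of_mul_eq_one
    (prod_primeToFactorial_mul_invPrimeToFactorial hp hunit)

lemma IsPadicLipschitz.invPrimeToFactorial_mul (hp : p.Prime)
    (hunit : ∀ m : ℕ, ¬ p ∣ m → IsUnit (m : R)) (hw : IsPadicLipschitz p n r w) :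
    IsPadicLipschitz p n r fun x => invPrimeToFactorial R p x * w x := by
  simpa using (isPadicLipschitz_invPrimeToFactorial hp hunit n).mul hw

lemma invPrimeToFactorial_comp_perm (σ : Equiv.Perm ι) (x : ι → ℕ) :
    invPrimeToFactorial R p (x ∘ σ) = invPrimeToFactorial R p x := by
  simp only [invPrimeToFactorial, Function.comp_apply]
  rw [Equiv.prod_comp σ fun j => primeToFactorial p (x j)]

variable [DecidableEq ι]

/-- The weight on the vectors of sum `n / p` that arises from a weight `w` on those of sum `n` by
summing out the lowest digits. -/
noncomputable def sumOutDigit (p n : ℕ) (w : (ι → ℕ) → R) (y : ι → ℕ) : R :=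
  ∑ a ∈ piAntidiag univ (n % p), invPrimeToFactorial R p (a + p • y) * w (a + p • y)

lemma sum_carryFree_multinomial_mul (hp : p.Prime) (hunit : ∀ m : ℕ, ¬ p ∣ m → IsUnit (m : R))
    (n : ℕ) (w : (ι → ℕ) → R) :
    ∑ x ∈ carryFree p n, (Nat.multinomial univ x : R) * w x =
      primeToFactorial p n *
        ∑ y ∈ carryFree p (n / p), (Nat.multinomial univ y : R) * sumOutDigit p n w y := by
  rw [sum_carryFree hp, mul_sum]
  refine sum_congr rfl fun y hy => ?_
  rw [sumOutDigit, mul_sum, mul_sum]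
  refine sum_congr rfl fun a ha => ?_
  rw [mem_carryFree] at hy
  rw [mem_piAntidiag_univ] at ha
  have hdiv := add_smul_div_eq y (ha ▸ Nat.mod_lt n hp.pos)
  have hsum : ∑ j, (a + p • y) j = n := by rw [sum_add_smul, ha, hy.1, Nat.mod_add_div]
  have hrec := multinomial_mul_prod_primeToFactorial_of_sum_div_eq hp.pos (x := a + p • y)
    (by simp only [hdiv, hsum, hy.1])
  simp only [hdiv, hsum] at hrec
  have hrecR := congrArg (Nat.cast (R := R)) hrec
  rw [Nat.cast_mul, Nat.cast_mul] at hrecR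
  linear_combination invPrimeToFactorial R p (a + p • y) * w (a + p • y) * hrecR -
    (Nat.multinomial univ (a + p • y) : R) * w (a + p • y) *
      prod_primeToFactorial_mul_invPrimeToFactorial hp hunit (a + p • y)

lemma sumOutDigit_comp_perm (hw : ∀ (σ : Equiv.Perm ι) x, w (x ∘ σ) = w x) (σ : Equiv.Perm ι)
    (y : ι → ℕ) : sumOutDigit p n w (y ∘ σ) = sumOutDigit p n w y :=
  sum_piAntidiag_add_smul_comp_perm (f := fun x => invPrimeToFactorial R p x * w x)
    (fun σ x => by rw [invPrimeToFactorial_comp_perm, hw]) p _ σ y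

lemma mod_mul_sumOutDigit_eq (hw : ∀ (σ : Equiv.Perm ι) x, w (x ∘ σ) = w x) (p n : ℕ) (i : ι)
    (y : ι → ℕ) :
    ((n % p : ℕ) : R) * sumOutDigit p n w y =
      ∑ a ∈ piAntidiag univ (n % p), (a i : R) * ∑ j,
        invPrimeToFactorial R p (a + p • (y ∘ Equiv.swap i j)) *
          w (a + p • (y ∘ Equiv.swap i j)) :=
  mul_sum_piAntidiag_add_smul_eq (f := fun x => invPrimeToFactorial R p x * w x)
    (fun σ x => by rw [invPrimeToFactorial_comp_perm, hw]) p _ i y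

lemma isUnit_natCast_mod (hp : p.Prime) (hunit : ∀ m : ℕ, ¬ p ∣ m → IsUnit (m : R))
    (hn : n % p ≠ 0) : IsUnit ((n % p : ℕ) : R) :=
  hunit _ fun h => hn (Nat.eq_zero_of_dvd_of_lt h (Nat.mod_lt n hp.pos))

lemma isPadicLipschitz_sumOutDigit (hp : p.Prime) (hunit : ∀ m : ℕ, ¬ p ∣ m → IsUnit (m : R))
    (hw : IsPadicLipschitz p n r w) : IsPadicLipschitz p (n / p) r (sumOutDigit p n w) :=
  IsPadicLipschitz.sum fun a ha => (hw.invPrimeToFactorial_mul hp hunit).add_smul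
    (by rw [mem_piAntidiag_univ.1 ha, Nat.mod_add_div])

lemma isPadicLipschitz_sumOutDigit_succ [Nonempty ι] (hp : p.Prime)
    (hunit : ∀ m : ℕ, ¬ p ∣ m → IsUnit (m : R)) (hι : p ∣ Fintype.card ι) (hn : n % p ≠ 0)
    (hw : IsPadicLipschitz p n r w) (hsymm : ∀ (σ : Equiv.Perm ι) x, w (x ∘ σ) = w x) :
    IsPadicLipschitz p (n / p) (r + 1) (sumOutDigit p n w) := by
  obtain ⟨i⟩ := ‹Nonempty ι›
  refine IsPadicLipschitz.of_const_mul (isUnit_natCast_mod hp hunit hn) ?_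
  simp only [mod_mul_sumOutDigit_eq hsymm p n i]
  refine IsPadicLipschitz.sum fun a ha => IsPadicLipschitz.const_mul ?_ _
  exact (hw.invPrimeToFactorial_mul hp hunit).sum_add_smul_comp_perm
    (by rw [mem_piAntidiag_univ.1 ha, Nat.mod_add_div]) hι (Equiv.swap i)

lemma pow_dvd_sumOutDigit_zero [Nonempty ι] (hp : p.Prime)
    (hunit : ∀ m : ℕ, ¬ p ∣ m → IsUnit (m : R)) {e : ℕ} (hι : p ^ e ∣ Fintype.card ι)
    (hn : n ≠ 0) (hnp : n < p) (hw : IsPadicLipschitz p n r w)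
    (hsymm : ∀ (σ : Equiv.Perm ι) x, w (x ∘ σ) = w x) :
    (p : R) ^ (e + r) ∣ sumOutDigit p n w 0 := by
  obtain ⟨i⟩ := ‹Nonempty ι›
  have hmod : n % p = n := Nat.mod_eq_of_lt hnp
  rw [← (isUnit_natCast_mod hp hunit (hmod.symm ▸ hn)).dvd_mul_left,
    mod_mul_sumOutDigit_eq hsymm p n i]
  refine dvd_sum fun a ha => Dvd.dvd.mul_left ?_ _
  have ha : ∑ j, a j = n := hmod ▸ mem_piAntidiag_univ.1 ha
  simp only [Pi.zero_comp, smul_zero, add_zero, sum_const, card_univ, nsmul_eq_mul, pow_add]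
  refine mul_dvd_mul ?_ ((hw.invPrimeToFactorial_mul hp hunit).pow_dvd a ha)
  exact_mod_cast Nat.cast_dvd_cast hι

end WeightedSum

section Main

variable {ι : Type*} [Fintype ι] [DecidableEq ι] [Nonempty ι] {p n : ℕ}

lemma spstar_zero (p : ℕ) : spstar p 0 = 0 := by simp [spstar]

lemma spstar_eq_ite_add_spstar_div (hp : 1 < p) (hn : n ≠ 0) :
    spstar p n = (if n % p = 0 then 0 else 1) + spstar p (n / p) := by
  rw [spstar, Nat.digits_eq_cons_digits_div hp hn]
  split_ifs with h <;> simp [spstar, h, add_comm]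

theorem pow_dvd_sum_carryFree_multinomial_mul {R : Type*} [CommRing R] (hp : p.Prime)
    (hunit : ∀ m : ℕ, ¬ p ∣ m → IsUnit (m : R)) {e : ℕ} (hι : p ^ (e + 1) ∣ Fintype.card ι)
    (hn : n ≠ 0) {r : ℕ} {w : (ι → ℕ) → R} (hw : IsPadicLipschitz p n r w)
    (hsymm : ∀ (σ : Equiv.Perm ι) x, w (x ∘ σ) = w x) :
    (p : R) ^ (spstar p n + e + r) ∣
      ∑ x ∈ carryFree p n, (Nat.multinomial univ x : R) * w x := by
  induction n using Nat.strong_induction_on generalizing r w with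
  | _ n ih =>
    rw [sum_carryFree_multinomial_mul hp hunit]
    refine Dvd.dvd.mul_left ?_ _
    have hlt : n / p < n := Nat.div_lt_self (Nat.pos_of_ne_zero hn) hp.one_lt
    rw [spstar_eq_ite_add_spstar_div hp.one_lt hn]
    rcases eq_or_ne (n / p) 0 with hdiv | hdiv
    · have hnp : n < p := (Nat.div_eq_zero_iff_lt hp.pos).1 hdiv
      have hlead := pow_dvd_sumOutDigit_zero hp hunit hι hn hnp hw hsymm
      rw [hdiv, carryFree_zero hp.ne_one, sum_singleton, spstar_zero, Nat.mod_eq_of_lt hnp,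
        if_neg hn, add_zero, add_comm 1 e]
      exact hlead.mul_left _
    · split_ifs with hmod
      · rw [zero_add]
        exact ih _ hlt hdiv (isPadicLipschitz_sumOutDigit hp hunit hw) (sumOutDigit_comp_perm hsymm)
      · have hpι : p ∣ Fintype.card ι := (dvd_pow_self p e.succ_ne_zero).trans hι
        have hgain := isPadicLipschitz_sumOutDigit_succ hp hunit hpι hmod hw hsymm
        have := ih _ hlt hdiv hgain (sumOutDigit_comp_perm hsymm)
        rwa [show 1 + spstar p (n / p) + e + r = spstar p (n / p) + e + (r + 1) by ring]

theorem pow_dvd_sum_carryFree_multinomial (hp : p.Prime) {e : ℕ}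
    (hι : p ^ (e + 1) ∣ Fintype.card ι) (hn : n ≠ 0) :
    p ^ (spstar p n + e) ∣ ∑ x ∈ carryFree (ι := ι) p n, Nat.multinomial univ x := by
  set N := spstar p n + e
  have hunit (m : ℕ) (hm : ¬ p ∣ m) : IsUnit (m : ZMod (p ^ N)) :=
    (ZMod.isUnit_iff_coprime m _).2 ((hp.coprime_iff_not_dvd.2 hm).symm.pow_right N)
  have hdvd := pow_dvd_sum_carryFree_multinomial_mul hp hunit hι hn
    (IsPadicLipschitz.const (r := 0) (c := 1) (by simp)) fun _ _ => rfl
  have hpow : (p : ZMod (p ^ N)) ^ N = 0 := by exact_mod_cast ZMod.natCast_self (p ^ N)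
  rw [← ZMod.natCast_eq_zero_iff, ← zero_dvd_iff, ← hpow]
  simpa using hdvd

lemma sum_carryFree_multinomial_ne_zero (hp : p ≠ 1) (n : ℕ) :
    ∑ x ∈ carryFree (ι := ι) p n, Nat.multinomial univ x ≠ 0 := by
  obtain ⟨i⟩ := ‹Nonempty ι›
  exact (sum_pos (fun _ _ => Nat.multinomial_pos _ _) ⟨_, single_mem_carryFree hp i n⟩).ne'

end Main

theorem stmt_16 (p k n : ℕ) (hp : p.Prime) (hk : 0 < k) (hn : 0 < n)
    (S : ℕ)
    (hS : S = ∑ x ∈ (Finset.Nat.antidiagonalTuple (k * p) n).filter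
        (fun x => ¬ (p ∣ Nat.multinomial Finset.univ x)),
      Nat.multinomial Finset.univ x) :
    spstar p n + padicValNat p k ≤ padicValNat p S := by
  have : Fact p.Prime := ⟨hp⟩
  have : NeZero (k * p) := ⟨(Nat.mul_pos hk hp.pos).ne'⟩
  have hcard : p ^ (padicValNat p k + 1) ∣ Fintype.card (Fin (k * p)) := by
    rw [Fintype.card_fin, pow_succ]
    exact mul_dvd_mul_right pow_padicValNat_dvd p
  rw [← piAntidiag_univ_fin_eq_antidiagonalTuple] at hS
  have hS0 : S ≠ 0 := hS ▸ sum_carryFree_multinomial_ne_zero hp.ne_one n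
  rw [← padicValNat_dvd_iff_le hS0, hS]
  exact pow_dvd_sum_carryFree_multinomial hp hcard hn.ne'
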